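/- For any planar simple graph G with maximum degree Δ(G) ≥ 12 and any integer k ≥ 1, the k-frugal choice number satisfies ch_k(G) ≤ ⌊(2·Δ(G) + 19)/k⌋ + 6. -/

import Mathlib

open SimpleGraph

/-- A drawing of a simple graph in the plane: vertices are mapped to distinct points,
edges to arcs (injective continuous curves parametrised on `[0,1]`) joining the images of
their endpoints, whose interiors avoid the vertex points and each other. -/
structure PlaneEmbedding {V : Type*} (G : SimpleGraph V) where
  pos : V → ℝ × ℝ
  inj : Function.Injective pos
  arc : G.edgeSet → ℝ → ℝ × ℝ
  arc_cont : ∀ e, ContinuousOn (arc e) (Set.Icc 0 1)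
  arc_inj : ∀ e, Set.InjOn (arc e) (Set.Icc 0 1)
  arc_ends : ∀ e : G.edgeSet, ∃ u v : V, (e : Sym2 V) = s(u, v) ∧
      arc e 0 = pos u ∧ arc e 1 = pos v
  arc_avoid : ∀ e : G.edgeSet, ∀ t ∈ Set.Ioo (0:ℝ) 1, arc e t ∉ Set.range pos
  arc_disjoint : ∀ e f : G.edgeSet, e ≠ f → ∀ s ∈ Set.Ioo (0:ℝ) 1, ∀ t ∈ Set.Ioo (0:ℝ) 1,
      arc e s ≠ arc f t

/-- A graph is planar if it admits a drawing in the plane. -/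
def SimpleGraph.IsPlanar {V : Type*} (G : SimpleGraph V) : Prop :=
  Nonempty (PlaneEmbedding G)

/-- A `k`-frugal colouring: a proper vertex colouring in which no colour appears more than
`k` times in the neighbourhood of any vertex. -/
def SimpleGraph.IsFrugalColoring {V α : Type*} (G : SimpleGraph V) (k : ℕ) (c : V → α) : Prop :=
  (∀ u v, G.Adj u v → c u ≠ c v) ∧
  ∀ (v : V) (a : α), {u | u ∈ G.neighborSet v ∧ c u = a}.ncard ≤ k

/-- The `k`-frugal choice number `ch_k(G)`: the least `t` such that any assignment of lists
of `t` integers to the vertices admits a `k`-frugal colouring from the lists. -/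
noncomputable def SimpleGraph.frugalChoiceNumber {V : Type*} (G : SimpleGraph V) (k : ℕ) : ℕ :=
  sInf {t : ℕ | ∀ L : V → Finset ℤ, (∀ v, (L v).card = t) →
    ∃ c : V → ℤ, (∀ v, c v ∈ L v) ∧ G.IsFrugalColoring k c}

/-!
A plane drawing attaches to each edge the parities of its numbers of turns about the vertices.
Two disjoint edges do not cross, so the difference of their arcs has a logarithm on the parameter
square, and this is a relation mod 2 between these parities. Such systems of parities survive edge
contractions and have none on `K₅` or on `K₃,₃`, which gives the bounds `3n - 3` and `2n - 4` on
the numbers of edges of a planar graph and of a bipartite planar graph.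

By discharging, some vertex `v` has degree at most five, few neighbours of large degree, and a
neighbour `u` such that contracting `uv` does not increase the maximum degree. In a frugal colouring
of the contraction no colour occurs more than `k` times around `v`, since the other neighbours of
`v` become neighbours of `u`. Extending it to `v`, the colours to avoid are those of the at most
five neighbours and those already used `k` times around some neighbour; the number of the latter is
at most `(2Δ + 19) / k`.
-/

lemma exists_exp_eq {X : Type*} [TopologicalSpace X] [SimplyConnectedSpace X]
    [LocallyPathConnectedSpace X] (f : C(X, ℂ)) (hf : ∀ a, f a ≠ 0) :
    ∃ L : C(X, ℂ), ∀ a, Complex.exp (L a) = f a := by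
  obtain ⟨a₀⟩ : Nonempty X := inferInstance
  obtain ⟨L, ⟨-, hL⟩, -⟩ := Complex.isCoveringMapOn_exp.existsUnique_continuousMap_lifts f
    (Complex.exp_log (hf a₀)) fun a ↦ hf a
  exact ⟨L, congrFun hL⟩

lemma sub_eq_sub_of_exp_eq_exp {X : Type*} [TopologicalSpace X] [PreconnectedSpace X]
    {L M : X → ℂ} (hL : Continuous L) (hM : Continuous M)
    (h : ∀ t, Complex.exp (L t) = Complex.exp (M t)) (s t : X) : L s - L t = M s - M t := by
  choose n hn using fun t ↦ Complex.exp_eq_exp_iff_exists_int.1 (h t)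
  have hn_eq (t : X) : (n t : ℂ) = (L t - M t) / (2 * Real.pi * Complex.I) := by
    rw [hn, add_sub_cancel_left, mul_div_cancel_right₀ _ Complex.two_pi_I_ne_zero]
  have hn_cont : Continuous n := by
    refine Int.isClosedEmbedding_coe_real.continuous_iff.2 ?_
    have : Continuous fun t ↦ ((n t : ℂ)).re := by
      simp only [hn_eq]
      fun_prop
    simpa only [Complex.intCast_re, Function.comp_def] using this
  rw [hn s, hn t, PreconnectedSpace.constant inferInstance hn_cont (x := s) (y := t)]
  ring

/-- The number mod 2 of crossings of an arc from `u` to `v` with an arc from `w` to `x`, where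
`m z` and `n z` are the parities of the numbers of turns of the two arcs about `z`, and `χ z z'`
is the parity attached to the direction from `z'` to `z`. It is the winding number about `0`,
mod 2, of the difference of the two arcs along the boundary of their parameter square. -/
def crossingParity {V : Type*} (χ : V → V → ZMod 2) (m n : V → ZMod 2) (u v w x : V) : ZMod 2 :=
  m w + m x + n u + n v + χ u w + χ u x + χ v w + χ v x

/-- Turn parities on a graph, the combinatorial shadow of a plane drawing: `direction u w` is a
parity attached to the direction from `w` to `u`, and `turns e w` is the parity of the number of
turns that the edge `e` makes about the vertex `w`. Only edges without a common endpoint are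
required not to cross. -/
structure TurnParity {V : Type*} (G : SimpleGraph V) where
  direction : V → V → ZMod 2
  turns : Sym2 V → V → ZMod 2
  direction_add_swap : ∀ {u w}, u ≠ w → direction u w + direction w u = 1
  crossing_eq_zero : ∀ {u v w x}, G.Adj u v → G.Adj w x → u ≠ w → u ≠ x → v ≠ w → v ≠ x →
    crossingParity direction (turns s(u, v)) (turns s(w, x)) u v w x = 0

namespace PlaneEmbedding

variable {V : Type*} {G : SimpleGraph V} (P : PlaneEmbedding G)

/-- The position of a vertex as a complex number. -/
noncomputable def point (v : V) : ℂ := Complex.equivRealProd.symm (P.pos v)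

/-- The arc of an edge as a curve in the complex plane, extended to `ℝ` by constants. -/
noncomputable def curve (e : G.edgeSet) (t : ℝ) : ℂ :=
  Complex.equivRealProd.symm (P.arc e (Set.projIcc (0 : ℝ) 1 zero_le_one t))

/-- The vertex at which the arc of an edge starts. -/
noncomputable def source (e : G.edgeSet) : V := (P.arc_ends e).choose

/-- The vertex at which the arc of an edge ends. -/
noncomputable def target (e : G.edgeSet) : V := (P.arc_ends e).choose_spec.choose

lemma coe_eq_source_target (e : G.edgeSet) : (e : Sym2 V) = s(P.source e, P.target e) :=
  (P.arc_ends e).choose_spec.choose_spec.1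

lemma arc_zero (e : G.edgeSet) : P.arc e 0 = P.pos (P.source e) :=
  (P.arc_ends e).choose_spec.choose_spec.2.1

lemma arc_one (e : G.edgeSet) : P.arc e 1 = P.pos (P.target e) :=
  (P.arc_ends e).choose_spec.choose_spec.2.2

lemma source_mem (e : G.edgeSet) : P.source e ∈ (e : Sym2 V) := by
  simp [P.coe_eq_source_target e]

lemma target_mem (e : G.edgeSet) : P.target e ∈ (e : Sym2 V) := by
  simp [P.coe_eq_source_target e]

lemma curve_zero (e : G.edgeSet) : P.curve e 0 = P.point (P.source e) := by
  simp [curve, point, P.arc_zero]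

lemma curve_one (e : G.edgeSet) : P.curve e 1 = P.point (P.target e) := by
  simp [curve, point, P.arc_one]

@[fun_prop]
lemma continuous_curve (e : G.edgeSet) : Continuous (P.curve e) :=
  Complex.equivRealProdCLM.symm.continuous.comp <| (P.arc_cont e).comp_continuous
    (continuous_subtype_val.comp continuous_projIcc) fun t ↦ (Set.projIcc _ _ zero_le_one t).2

lemma point_injective : Function.Injective P.point :=
  Complex.equivRealProd.symm.injective.comp P.inj

lemma point_sub_ne_zero {u w : V} (h : u ≠ w) : P.point u - P.point w ≠ 0 :=
  sub_ne_zero.2 (P.point_injective.ne h)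

lemma curve_eq_point_or_exists_Ioo (e : G.edgeSet) (t : ℝ) :
    (∃ u ∈ (e : Sym2 V), P.curve e t = P.point u) ∨
      ∃ s ∈ Set.Ioo (0 : ℝ) 1, P.curve e t = Complex.equivRealProd.symm (P.arc e s) := by
  obtain ⟨h0, h1⟩ := (Set.projIcc (0 : ℝ) 1 zero_le_one t).2
  rcases h0.eq_or_lt with h0 | h0
  · exact .inl ⟨_, P.source_mem e, by simp [curve, point, ← h0, P.arc_zero]⟩
  rcases h1.eq_or_lt with h1 | h1
  · exact .inl ⟨_, P.target_mem e, by simp [curve, point, h1, P.arc_one]⟩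
  · exact .inr ⟨_, ⟨h0, h1⟩, rfl⟩

lemma curve_ne_point {e : G.edgeSet} {w : V} (hw : w ∉ (e : Sym2 V)) (t : ℝ) :
    P.curve e t ≠ P.point w := by
  rcases P.curve_eq_point_or_exists_Ioo e t with ⟨u, hu, h⟩ | ⟨s, hs, h⟩ <;> rw [h]
  · exact P.point_injective.ne fun huw ↦ hw (huw ▸ hu)
  · exact fun h' ↦ P.arc_avoid e s hs ⟨w, (Complex.equivRealProd.symm.injective h').symm⟩

lemma curve_ne_curve {e f : G.edgeSet} (hef : ∀ w ∈ (e : Sym2 V), w ∉ (f : Sym2 V)) (s t : ℝ) :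
    P.curve e s ≠ P.curve f t := by
  have hne : e ≠ f := by
    rintro rfl
    exact hef _ (P.source_mem e) (P.source_mem e)
  rcases P.curve_eq_point_or_exists_Ioo e s with ⟨u, hu, h⟩ | ⟨s', hs, h⟩
  · exact h ▸ (P.curve_ne_point (hef u hu) t).symm
  rcases P.curve_eq_point_or_exists_Ioo f t with ⟨v, hv, h'⟩ | ⟨t', ht, h'⟩
  · exact h' ▸ P.curve_ne_point (fun hv' ↦ hef v hv' hv) s
  · rw [h, h']
    exact Complex.equivRealProd.symm.injective.ne (P.arc_disjoint e f hne s' hs t' ht)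

/-- The principal logarithm of the displacement from `w` to `u`. -/
noncomputable def logDiff (u w : V) : ℂ := Complex.log (P.point u - P.point w)

lemma exp_logDiff {u w : V} (h : u ≠ w) : Complex.exp (P.logDiff u w) = P.point u - P.point w :=
  Complex.exp_log (P.point_sub_ne_zero h)

lemma exists_logDiff_sub_swap (u w : V) : ∃ m : ℤ, u ≠ w →
    P.logDiff u w - P.logDiff w u = (2 * m + 1) * (Real.pi * Complex.I) := by
  by_cases huw : u = w
  · exact ⟨0, fun h ↦ absurd huw h⟩
  obtain ⟨m, hm⟩ := Complex.exp_eq_exp_iff_exists_int.1 <|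
    show Complex.exp (P.logDiff u w) = Complex.exp (P.logDiff w u + Real.pi * Complex.I) by
      rw [Complex.exp_add, Complex.exp_pi_mul_I, P.exp_logDiff huw, P.exp_logDiff (Ne.symm huw)]
      ring
  exact ⟨m, fun _ ↦ by rw [hm]; ring⟩

/-- The integer `m` such that the logarithms of the displacements between `u` and `w` differ by
`2 * m + 1` half turns. -/
noncomputable def directionIndex (u w : V) : ℤ := (P.exists_logDiff_sub_swap u w).choose

lemma logDiff_sub_swap {u w : V} (h : u ≠ w) : P.logDiff u w - P.logDiff w u =
    (2 * P.directionIndex u w + 1) * (Real.pi * Complex.I) :=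
  (P.exists_logDiff_sub_swap u w).choose_spec h

lemma directionIndex_add_swap {u w : V} (h : u ≠ w) :
    P.directionIndex u w + P.directionIndex w u = -1 := by
  have hmul : ((P.directionIndex u w + P.directionIndex w u + 1 : ℤ) : ℂ) *
      (2 * Real.pi * Complex.I) = 0 := by
    push_cast
    linear_combination -P.logDiff_sub_swap h - P.logDiff_sub_swap h.symm
  have := Int.cast_eq_zero.1 ((mul_eq_zero.1 hmul).resolve_right Complex.two_pi_I_ne_zero)
  omega

lemma exists_lift_sub_lift (e : G.edgeSet) (w : V) : ∃ n : ℤ, w ∉ (e : Sym2 V) →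
    ∀ L : ℝ → ℂ, Continuous L → (∀ t, Complex.exp (L t) = P.curve e t - P.point w) →
      L 1 - L 0 = P.logDiff (P.target e) w - P.logDiff (P.source e) w +
        n * (2 * Real.pi * Complex.I) := by
  by_cases hw : w ∈ (e : Sym2 V)
  · exact ⟨0, fun h ↦ absurd hw h⟩
  obtain ⟨M, hM⟩ := exists_exp_eq ⟨fun t ↦ P.curve e t - P.point w, by fun_prop⟩
    fun t ↦ sub_ne_zero.2 (P.curve_ne_point hw t)
  simp only [ContinuousMap.coe_mk] at hM
  obtain ⟨m, hm⟩ := Complex.exp_eq_exp_iff_exists_int.1 <|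
    show Complex.exp (M 0) = Complex.exp (P.logDiff (P.source e) w) by
      rw [hM, P.curve_zero, P.exp_logDiff (ne_of_mem_of_not_mem (P.source_mem e) hw)]
  obtain ⟨n, hn⟩ := Complex.exp_eq_exp_iff_exists_int.1 <|
    show Complex.exp (M 1) = Complex.exp (P.logDiff (P.target e) w) by
      rw [hM, P.curve_one, P.exp_logDiff (ne_of_mem_of_not_mem (P.target_mem e) hw)]
  refine ⟨n - m, fun _ L hL hLe ↦ ?_⟩
  rw [sub_eq_sub_of_exp_eq_exp hL M.continuous (fun t ↦ (hLe t).trans (hM t).symm) 1 0, hm, hn]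
  push_cast
  ring

/-- The number of turns of the arc of `e` about the vertex `w` off `e`, relative to the principal
logarithms at its ends. -/
noncomputable def turnNumber (e : G.edgeSet) (w : V) : ℤ := (P.exists_lift_sub_lift e w).choose

lemma lift_sub_lift {e : G.edgeSet} {w : V} (hw : w ∉ (e : Sym2 V)) {L : ℝ → ℂ}
    (hL : Continuous L) (hLe : ∀ t, Complex.exp (L t) = P.curve e t - P.point w) :
    L 1 - L 0 = P.logDiff (P.target e) w - P.logDiff (P.source e) w +
      P.turnNumber e w * (2 * Real.pi * Complex.I) :=
  (P.exists_lift_sub_lift e w).choose_spec hw L hL hLe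

/-- The difference of two disjoint arcs has no zero on the parameter square, so the increments of
its logarithm along the four sides cancel. -/
lemma turnNumber_sub_turnNumber {e f : G.edgeSet} (hef : ∀ w ∈ (e : Sym2 V), w ∉ (f : Sym2 V)) :
    P.turnNumber e (P.source f) - P.turnNumber e (P.target f)
      - P.turnNumber f (P.source e) + P.turnNumber f (P.target e)
      - P.directionIndex (P.source e) (P.source f) + P.directionIndex (P.source e) (P.target f)
      + P.directionIndex (P.target e) (P.source f) - P.directionIndex (P.target e) (P.target f)
      = 0 := by
  have hse := P.source_mem e
  have hte := P.target_mem e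
  have hsf := P.source_mem f
  have htf := P.target_mem f
  have hne {z z' : V} (hz : z ∈ (e : Sym2 V)) (hz' : z' ∈ (f : Sym2 V)) : z ≠ z' := by
    rintro rfl
    exact hef _ hz hz'
  obtain ⟨L, hL⟩ := exists_exp_eq
    (X := ℝ × ℝ) ⟨fun a ↦ P.curve e a.1 - P.curve f a.2, by fun_prop⟩
    fun a ↦ sub_ne_zero.2 (P.curve_ne_curve hef a.1 a.2)
  simp only [ContinuousMap.coe_mk] at hL
  have bottom := P.lift_sub_lift (fun h ↦ hef _ h hsf) (L := fun s ↦ L (s, 0)) (by fun_prop)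
    fun s ↦ by rw [hL, P.curve_zero]
  have top := P.lift_sub_lift (fun h ↦ hef _ h htf) (L := fun s ↦ L (s, 1)) (by fun_prop)
    fun s ↦ by rw [hL, P.curve_one]
  have left := P.lift_sub_lift (hef _ hse) (L := fun t ↦ L (0, t) + Real.pi * Complex.I)
    (by fun_prop) fun t ↦ by rw [Complex.exp_add, Complex.exp_pi_mul_I, hL, P.curve_zero]; ring
  have right := P.lift_sub_lift (hef _ hte) (L := fun t ↦ L (1, t) + Real.pi * Complex.I)
    (by fun_prop) fun t ↦ by rw [Complex.exp_add, Complex.exp_pi_mul_I, hL, P.curve_one]; ring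
  refine Int.cast_injective (α := ℂ) (mul_right_cancel₀ Complex.two_pi_I_ne_zero ?_)
  push_cast
  linear_combination -bottom + top + left - right + P.logDiff_sub_swap (hne hse hsf)
    - P.logDiff_sub_swap (hne hse htf) - P.logDiff_sub_swap (hne hte hsf)
    + P.logDiff_sub_swap (hne hte htf)

lemma crossingParity_source_target {e f : G.edgeSet}
    (hef : ∀ w ∈ (e : Sym2 V), w ∉ (f : Sym2 V)) :
    crossingParity (fun u w ↦ (P.directionIndex u w : ZMod 2)) (fun w ↦ (P.turnNumber e w : ZMod 2))
      (fun w ↦ (P.turnNumber f w : ZMod 2)) (P.source e) (P.target e) (P.source f) (P.target f)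
      = 0 := by
  have h := congrArg (Int.cast : ℤ → ZMod 2) (P.turnNumber_sub_turnNumber hef)
  push_cast [CharTwo.sub_eq_add] at h
  rw [← h, crossingParity]

open scoped Classical in
/-- The turn parities of a plane drawing. -/
noncomputable def turnParity : TurnParity G where
  direction u w := P.directionIndex u w
  turns e w := if h : e ∈ G.edgeSet then (P.turnNumber ⟨e, h⟩ w : ZMod 2) else 0
  direction_add_swap h := by
    exact_mod_cast congrArg (Int.cast : ℤ → ZMod 2) (P.directionIndex_add_swap h)
  crossing_eq_zero {u v w x} huv hwx huw hux hvw hvx := by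
    let e : G.edgeSet := ⟨s(u, v), huv⟩
    let f : G.edgeSet := ⟨s(w, x), hwx⟩
    have h := P.crossingParity_source_target (e := e) (f := f) (by simp [e, f, *])
    have he := P.coe_eq_source_target e
    have hf := P.coe_eq_source_target f
    simp only [crossingParity, mem_edgeSet, huv, hwx, dif_pos] at h ⊢
    simp only [e, f, Sym2.eq_iff] at he hf
    rcases he with ⟨hu, hv⟩ | ⟨hu, hv⟩ <;> rcases hf with ⟨hw, hx⟩ | ⟨hw, hx⟩ <;>
      rw [← hu, ← hv, ← hw, ← hx] at h <;> linear_combination h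

end PlaneEmbedding

/-! ### Turn parities under contraction -/

section CrossingParity

variable {V : Type*} {χ : V → V → ZMod 2} {m m₁ m₂ n n₁ n₂ : V → ZMod 2} {u v w x : V}

lemma crossingParity_swap_left :
    crossingParity χ m n v u w x = crossingParity χ m n u v w x := by
  unfold crossingParity
  ring

lemma crossingParity_comm (hχ : ∀ {z z'}, z ≠ z' → χ z z' + χ z' z = 1) (huw : u ≠ w)
    (hux : u ≠ x) (hvw : v ≠ w) (hvx : v ≠ x) :
    crossingParity χ n m w x u v = crossingParity χ m n u v w x := by
  unfold crossingParity
  linear_combination hχ huw + hχ hux + hχ hvw + hχ hvx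
    + (2 - χ u w - χ u x - χ v w - χ v x) * CharTwo.two_eq_zero (R := ZMod 2)

lemma crossingParity_add_left (y : V) : crossingParity χ (m₁ + m₂) n u v w x =
    crossingParity χ m₁ n u y w x + crossingParity χ m₂ n y v w x := by
  simp only [crossingParity, Pi.add_apply]
  linear_combination -(n y + χ y w + χ y x) * CharTwo.two_eq_zero (R := ZMod 2)

lemma crossingParity_add_right (y : V) : crossingParity χ m (n₁ + n₂) u v w x =
    crossingParity χ m n₁ u v w y + crossingParity χ m n₂ u v y x := by
  simp only [crossingParity, Pi.add_apply]
  linear_combination -(m y + χ u y + χ v y) * CharTwo.two_eq_zero (R := ZMod 2)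

lemma crossingParity_zero_right_self : crossingParity χ m 0 u v w w = 0 := by
  simp only [crossingParity, Pi.zero_apply]
  linear_combination (m w + χ u w + χ v w) * CharTwo.two_eq_zero (R := ZMod 2)

end CrossingParity

/-- The graph obtained by identifying `v` with `u`. The vertex type is kept, with `v` left
isolated, so that identifications can be iterated; if `v` and `u` are adjacent this is the
contraction of the edge between them. -/
def identifyVertex {V : Type*} [DecidableEq V] (G : SimpleGraph V) (v u : V) : SimpleGraph V :=
  G.map (Function.update id v u)

section IdentifyVertex

variable {V : Type*} [DecidableEq V] {G : SimpleGraph V} {u v x y : V}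

lemma identifyVertex_adj (huv : u ≠ v) : (identifyVertex G v u).Adj x y ↔
    x ≠ y ∧ x ≠ v ∧ y ≠ v ∧ (G.Adj x y ∨ x = u ∧ G.Adj v y ∨ y = u ∧ G.Adj v x) := by
  simp only [identifyVertex, map_adj', Function.update_apply, id_eq]
  constructor
  · rintro ⟨hxy, a, b, hab, ha, hb⟩
    have := hab.symm
    grind
  · rintro ⟨hxy, hx, hy, h | ⟨rfl, h⟩ | ⟨rfl, h⟩⟩
    · exact ⟨hxy, x, y, h, if_neg hx, if_neg hy⟩
    · exact ⟨hxy, v, y, h, if_pos rfl, if_neg hy⟩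
    · exact ⟨hxy, x, v, h.symm, if_neg hx, if_pos rfl⟩

lemma exists_eq_of_identifyVertex_adj (huv : u ≠ v) (hxy : (identifyVertex G v u).Adj x y)
    (h : ¬ G.Adj x y) : ∃ z, s(x, y) = s(u, z) ∧ z ≠ u ∧ z ≠ v ∧ G.Adj v z := by
  obtain ⟨hne, hx, hy, h' | ⟨rfl, h'⟩ | ⟨rfl, h'⟩⟩ := (identifyVertex_adj huv).1 hxy
  · exact absurd h' h
  · exact ⟨y, rfl, hne.symm, hy, h'⟩
  · exact ⟨x, Sym2.eq_swap, hne, hx, h'⟩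

end IdentifyVertex

namespace TurnParity

variable {V : Type*} {G : SimpleGraph V} (T : TurnParity G)

/-- The turn parities of a subgraph. -/
def mono {H : SimpleGraph V} (h : H ≤ G) : TurnParity H where
  direction := T.direction
  turns := T.turns
  direction_add_swap := T.direction_add_swap
  crossing_eq_zero huv hwx := T.crossing_eq_zero (h huv) (h hwx)

section Identify

variable [DecidableEq V] {u v w x y : V}

open scoped Classical in
/-- The turn parities of the graph in which `v` is contracted into `u`: a new edge from `u` runs
along `s(u, v)` first. -/
noncomputable def identifyTurns (v u : V) (e : Sym2 V) : V → ZMod 2 :=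
  if e ∈ G.edgeSet then T.turns e
  else T.turns s(u, v) + T.turns (e.map (Function.update id u v))

lemma crossingParity_identifyTurns_of_adj (huv : G.Adj u v) (hvy : G.Adj v y) (huy : ¬ G.Adj u y)
    (hyu : y ≠ u) (hwx : G.Adj w x) (hne : ∀ z ∈ [u, v, y], z ≠ w ∧ z ≠ x) :
    crossingParity T.direction (T.identifyTurns v u s(u, y)) (T.turns s(w, x)) u y w x = 0 := by
  simp only [List.forall_mem_cons, List.not_mem_nil, false_implies, implies_true, and_true] at hne
  obtain ⟨⟨huw, hux⟩, ⟨hvw, hvx⟩, hyw, hyx⟩ := hne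
  simp only [identifyTurns, mem_edgeSet, huy, if_false, Sym2.map_mk, Function.update_self,
    Function.update_of_ne hyu, id_eq]
  rw [crossingParity_add_left v, T.crossing_eq_zero huv hwx huw hux hvw hvx,
    T.crossing_eq_zero hvy hwx hvw hvx hyw hyx, add_zero]

lemma crossingParity_identifyTurns_of_not_adj {a b : V} (huv : G.Adj u v)
    (hab : (identifyVertex G v u).Adj a b) (hab' : ¬ G.Adj a b)
    (hwx : (identifyVertex G v u).Adj w x) (haw : a ≠ w) (hax : a ≠ x) (hbw : b ≠ w)
    (hbx : b ≠ x) :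
    crossingParity T.direction (T.identifyTurns v u s(a, b)) (T.identifyTurns v u s(w, x))
      a b w x = 0 := by
  obtain ⟨z, hz, hzu, hzv, hvz⟩ := exists_eq_of_identifyVertex_adj huv.ne hab hab'
  have hwx' : G.Adj w x := by
    by_contra h
    obtain ⟨z', hz', -⟩ := exists_eq_of_identifyVertex_adj huv.ne hwx h
    simp only [Sym2.eq_iff] at hz hz'
    grind
  obtain ⟨-, hwv, hxv, -⟩ := (identifyVertex_adj huv.ne).1 hwx
  rw [show T.identifyTurns v u s(w, x) = T.turns s(w, x) from if_pos hwx']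
  rcases Sym2.eq_iff.1 hz with ⟨rfl, rfl⟩ | ⟨rfl, rfl⟩
  · exact T.crossingParity_identifyTurns_of_adj huv hvz hab' hzu hwx' (by simp [*, Ne.symm])
  · rw [Sym2.eq_swap, crossingParity_swap_left]
    exact T.crossingParity_identifyTurns_of_adj huv hvz (mt Adj.symm hab') hzu hwx'
      (by simp [*, Ne.symm])

/-- The turn parities obtained by contracting the edge from `v` to `u`. -/
noncomputable def identify (huv : G.Adj u v) : TurnParity (identifyVertex G v u) where
  direction := T.direction
  turns := T.identifyTurns v u
  direction_add_swap := T.direction_add_swap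
  crossing_eq_zero {a b w x} hab hwx haw hax hbw hbx := by
    by_cases hab' : G.Adj a b
    · by_cases hwx' : G.Adj w x
      · simpa [identifyTurns, hab', hwx'] using T.crossing_eq_zero hab' hwx' haw hax hbw hbx
      · rw [← crossingParity_comm T.direction_add_swap haw hax hbw hbx]
        exact T.crossingParity_identifyTurns_of_not_adj huv hwx hwx' hab haw.symm hbw.symm
          hax.symm hbx.symm
    · exact T.crossingParity_identifyTurns_of_not_adj huv hab hab' hwx haw hax hbw hbx

end Identify

/-! ### Excluded subdivisions -/

/-- The total turn parities of a walk. -/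
def walkTurns {u v : V} (p : G.Walk u v) : V → ZMod 2 := (p.edges.map T.turns).sum

lemma crossingParity_walkTurns {u v w x : V} (huv : G.Adj u v) (p : G.Walk w x)
    (hu : u ∉ p.support) (hv : v ∉ p.support) :
    crossingParity T.direction (T.turns s(u, v)) (T.walkTurns p) u v w x = 0 := by
  induction p with
  | nil => exact crossingParity_zero_right_self
  | @cons w y x hwy p ih =>
    rw [Walk.support_cons, List.mem_cons, not_or] at hu hv
    have hyp := p.start_mem_support
    rw [show T.walkTurns (.cons hwy p) = T.turns s(w, y) + T.walkTurns p by simp [walkTurns],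
      crossingParity_add_right y, ih hu.2 hv.2, add_zero]
    exact T.crossing_eq_zero huv hwy hu.1 (ne_of_mem_of_not_mem hyp hu.2).symm hv.1
      (ne_of_mem_of_not_mem hyp hv.2).symm

/-- In the sum of the relations for all pairs of disjoint edges the turns cancel, while the
directions add up to `1`. -/
lemma cliqueFree_five (T : TurnParity G) : G.CliqueFree 5 := by
  by_contra h
  obtain ⟨f⟩ := not_cliqueFree_iff_top_isContained 5 |>.1 h
  have hne {i j : Fin 5} (hij : i ≠ j) : f i ≠ f j := f.injective.ne hij
  have hadj {i j : Fin 5} (hij : i ≠ j) : G.Adj (f i) (f j) := f.toHom.map_adj hij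
  have cross (i j k l : Fin 5)
      (h : i ≠ j ∧ k ≠ l ∧ i ≠ k ∧ i ≠ l ∧ j ≠ k ∧ j ≠ l := by decide) :=
    T.crossing_eq_zero (hadj h.1) (hadj h.2.1) (hne h.2.2.1) (hne h.2.2.2.1) (hne h.2.2.2.2.1)
      (hne h.2.2.2.2.2)
  have swap (i j : Fin 5) (hij : i ≠ j := by decide) := T.direction_add_swap (hne hij)
  unfold crossingParity at cross
  refine zero_ne_one (α := ZMod 2) ?_
  linear_combination (norm := (ring_nf; reduce_mod_char))
    cross 0 1 2 3 + cross 0 2 1 3 + cross 0 3 1 2 + cross 0 1 2 4 + cross 0 2 1 4 + cross 0 4 1 2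
    + cross 0 1 3 4 + cross 0 3 1 4 + cross 0 4 1 3 + cross 0 2 3 4 + cross 0 3 2 4
    + cross 0 4 2 3 + cross 1 2 3 4 + cross 1 3 2 4 + cross 1 4 2 3
    + swap 2 3 + swap 2 4 + swap 3 4

/-- As on `K₅`, the relations for all disjoint edges and walks, here of a subdivided `K₃,₃`, add up
to `1`. -/
lemma false_of_walks (T : TurnParity G) {x₁ x₂ x₃ : V} {y : Fin 3 → V}
    (hy : Function.Injective y) (hx : x₁ ≠ x₂) (h₁ : ∀ j, G.Adj x₁ (y j))
    (h₂ : ∀ j, G.Adj x₂ (y j)) (p : ∀ j, G.Walk x₃ (y j)) (hp₁ : ∀ j, x₁ ∉ (p j).support)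
    (hp₂ : ∀ j, x₂ ∉ (p j).support) (hpy : ∀ j l, j ≠ l → y l ∉ (p j).support) : False := by
  have edges (j l : Fin 3) (hjl : j ≠ l := by decide) :=
    T.crossing_eq_zero (h₁ j) (h₂ l) hx (h₁ l).ne (h₂ j).ne' (hy.ne hjl)
  have walk₁ (j l : Fin 3) (hjl : j ≠ l := by decide) :=
    T.crossingParity_walkTurns (h₁ j) (p l) (hp₁ l) (hpy l j hjl.symm)
  have walk₂ (j l : Fin 3) (hjl : j ≠ l := by decide) :=
    T.crossingParity_walkTurns (h₂ j) (p l) (hp₂ l) (hpy l j hjl.symm)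
  have swap (j l : Fin 3) (hjl : j ≠ l := by decide) := T.direction_add_swap (hy.ne hjl)
  unfold crossingParity at edges walk₁ walk₂
  refine zero_ne_one (α := ZMod 2) ?_
  linear_combination (norm := (ring_nf; reduce_mod_char))
    edges 0 1 + edges 0 2 + edges 1 0 + edges 1 2 + edges 2 0 + edges 2 1
    + walk₁ 0 1 + walk₁ 0 2 + walk₁ 1 0 + walk₁ 1 2 + walk₁ 2 0 + walk₁ 2 1
    + walk₂ 0 1 + walk₂ 0 2 + walk₂ 1 0 + walk₂ 1 2 + walk₂ 2 0 + walk₂ 2 1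
    + swap 0 1 + swap 0 2 + swap 1 2

end TurnParity

/-! ### Counting edges -/

open scoped Finset

section EdgeCount

variable {V : Type*} {G : SimpleGraph V} {u v : V} {S : Finset V}

lemma support_deleteIncidenceSet_subset_erase [DecidableEq V] (hS : G.support ⊆ S) (v : V) :
    (G.deleteIncidenceSet v).support ⊆ (S.erase v : Finset V) := by
  rw [Finset.coe_erase]
  exact (G.support_deleteIncidenceSet_subset v).trans (Set.sdiff_subset_sdiff_left hS)

lemma support_identifyVertex_subset_erase [DecidableEq V] (hS : G.support ⊆ S) (hu : u ∈ S)
    (huv : u ≠ v) : (identifyVertex G v u).support ⊆ (S.erase v : Finset V) := by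
  rintro x ⟨y, hxy⟩
  obtain ⟨-, hxv, -, h | ⟨rfl, -⟩ | ⟨-, h⟩⟩ := (identifyVertex_adj huv).1 hxy
  · exact Finset.mem_erase.2 ⟨hxv, hS ⟨y, h⟩⟩
  · exact Finset.mem_erase.2 ⟨hxv, hu⟩
  · exact Finset.mem_erase.2 ⟨hxv, hS ⟨v, h.symm⟩⟩

lemma exists_le_ncard_edgeSet_eq {k : ℕ} (hk : k ≤ G.edgeSet.ncard) :
    ∃ H ≤ G, H.edgeSet.ncard = k := by
  obtain ⟨s, hs, rfl⟩ := Set.exists_subset_card_eq hk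
  refine ⟨fromEdgeSet s, fun a b h ↦ hs ((fromEdgeSet_adj s).1 h).1, ?_⟩
  rw [edgeSet_fromEdgeSet, sdiff_eq_left.2]
  exact Set.disjoint_left.2 fun e he ↦ G.not_isDiag_of_mem_edgeSet (hs he)

lemma exists_adj_of_ncard_edgeSet_pos (h : 0 < G.edgeSet.ncard) : ∃ a b, G.Adj a b :=
  ne_bot_iff_exists_adj.1 <| edgeSet_nonempty.1 <| Set.nonempty_of_ncard_ne_zero h.ne'

variable [Fintype V]

open scoped Classical in
lemma sum_degree_eq_two_mul_ncard_edgeSet (G : SimpleGraph V) :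
    ∑ v, G.degree v = 2 * G.edgeSet.ncard := by
  rw [G.sum_degrees_eq_twice_card_edges, ← coe_edgeFinset, Set.ncard_coe_finset]

open scoped Classical in
lemma ncard_edgeSet_deleteIncidenceSet_add_degree (G : SimpleGraph V) (v : V) :
    (G.deleteIncidenceSet v).edgeSet.ncard + G.degree v = G.edgeSet.ncard := by
  rw [edgeSet_deleteIncidenceSet, ← card_incidenceFinset_eq_degree, incidenceFinset,
    ← Set.ncard_eq_toFinset_card', Set.ncard_sdiff_add_ncard_of_subset (G.incidenceSet_subset v)]

open scoped Classical in
lemma ncard_edgeSet_le_identifyVertex (huv : u ≠ v) :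
    G.edgeSet.ncard ≤ (identifyVertex G v u).edgeSet.ncard +
      #(G.neighborFinset v ∩ insert u (G.neighborFinset u)) := by
  let new := G.neighborFinset v \ insert u (G.neighborFinset u)
  have hdisj : Disjoint (G.deleteIncidenceSet v).edgeSet ((s(u, ·)) '' (new : Set V)) := by
    rw [Set.disjoint_right]
    rintro _ ⟨w, hw, rfl⟩
    simp_all [new, deleteIncidenceSet_adj]
  have hsub : (G.deleteIncidenceSet v).edgeSet ∪ (s(u, ·)) '' (new : Set V) ⊆
      (identifyVertex G v u).edgeSet := by
    refine Set.union_subset (edgeSet_mono fun a b hab ↦ ?_) (Set.image_subset_iff.2 fun w hw ↦ ?_)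
    · rw [deleteIncidenceSet_adj] at hab
      exact (identifyVertex_adj huv).2 ⟨hab.1.ne, hab.2.1, hab.2.2, .inl hab.1⟩
    · simp only [new, Finset.coe_sdiff, Finset.coe_insert, coe_neighborFinset, Set.mem_sdiff,
        mem_neighborSet, Set.mem_insert_iff, not_or] at hw
      exact (identifyVertex_adj huv).2
        ⟨Ne.symm hw.2.1, huv, hw.1.ne', .inr (.inl ⟨rfl, hw.1⟩)⟩
  have hcard := Set.ncard_le_ncard hsub
  rw [Set.ncard_union_eq hdisj, Set.ncard_image_of_injective _ fun a b h ↦ Sym2.congr_right.1 h,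
    Set.ncard_coe_finset] at hcard
  have hdel := ncard_edgeSet_deleteIncidenceSet_add_degree G v
  have hnbr : _ + #new = _ := Finset.card_inter_add_card_sdiff (G.neighborFinset v)
    (insert u (G.neighborFinset u))
  rw [card_neighborFinset_eq_degree] at hnbr
  lia

open scoped Classical in
lemma exists_degree_lt {d : ℕ} (h : 2 * G.edgeSet.ncard < d * #S) :
    ∃ v ∈ S, G.degree v < d := by
  refine Finset.exists_lt_of_sum_lt (g := fun _ ↦ d) ?_
  calc ∑ v ∈ S, G.degree v ≤ ∑ v, G.degree v :=
        Finset.sum_le_sum_of_subset (Finset.subset_univ S)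
    _ < ∑ _v ∈ S, d := by
      rwa [sum_degree_eq_two_mul_ncard_edgeSet, Finset.sum_const, smul_eq_mul, mul_comm #S]

open scoped Classical in
lemma exists_not_adj_of_cliqueFree_succ {n : ℕ} (hG : G.CliqueFree (n + 1))
    (hv : n ≤ G.degree v) : ∃ x y, G.Adj v x ∧ G.Adj v y ∧ x ≠ y ∧ ¬ G.Adj x y := by
  by_contra! h
  obtain ⟨s, hs, rfl⟩ := Finset.exists_subset_card_eq (s := G.neighborFinset v) hv
  have hsv : ∀ x ∈ s, G.Adj v x := fun x hx ↦ (G.mem_neighborFinset v x).1 (hs hx)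
  have hclique : G.IsNClique #s s := ⟨fun x hx y hy ↦ h x y (hsv x hx) (hsv y hy), rfl⟩
  exact hG _ (hclique.insert hsv)

end EdgeCount

namespace TurnParity

variable {V : Type*} {G : SimpleGraph V}

/-- Contracting `b` with `x` would give a clique on five vertices. -/
lemma false_of_adj_link (T : TurnParity G) {v x y a b c : V} (hvx : G.Adj v x) (hvy : G.Adj v y)
    (hva : G.Adj v a) (hvb : G.Adj v b) (hvc : G.Adj v c) (hxa : G.Adj x a) (hxb : G.Adj x b)
    (hxc : G.Adj x c) (hya : G.Adj y a) (hyb : G.Adj y b) (hyc : G.Adj y c) (hac : G.Adj a c)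
    (hxy : x ≠ y) (hab : a ≠ b) (hbc : b ≠ c) : False := by
  classical
  have old {s t : V} (h : G.Adj s t) (hs : s ≠ x) (ht : t ≠ x) :
      (identifyVertex G x b).Adj s t := (identifyVertex_adj hxb.ne').2 ⟨h.ne, hs, ht, .inl h⟩
  have new {t : V} (h : G.Adj x t) (ht : b ≠ t) : (identifyVertex G x b).Adj b t :=
    (identifyVertex_adj hxb.ne').2 ⟨ht, hxb.ne', h.ne', .inr (.inl ⟨rfl, h⟩)⟩
  have hbac : (identifyVertex G x b).IsNClique 3 {b, a, c} :=
    is3Clique_triple_iff.2 ⟨new hxa hab.symm, new hxc hbc, old hac hxa.ne' hxc.ne'⟩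
  have hybac : (identifyVertex G x b).IsNClique 4 {y, b, a, c} := hbac.insert fun t ht ↦ by
    simp only [Finset.mem_insert, Finset.mem_singleton] at ht
    rcases ht with rfl | rfl | rfl <;> exact old ‹_› hxy.symm (G.ne_of_adj ‹_›).symm
  refine (T.identify hxb.symm).cliqueFree_five _ (hybac.insert (a := v) fun t ht ↦ ?_)
  rw [Finset.mem_insert, Finset.mem_insert, Finset.mem_insert, Finset.mem_singleton] at ht
  rcases ht with rfl | rfl | rfl | rfl
  exacts [old hvy hvx.ne hxy.symm, old hvb hvx.ne hxb.ne', old hva hvx.ne hxa.ne',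
    old hvc hvx.ne hxc.ne']

open scoped Classical in
lemma exists_adj_card_inter_neighborFinset_le_two [Fintype V] (T : TurnParity G) {v : V}
    (h4 : 4 ≤ G.degree v) (h5 : G.degree v ≤ 5) :
    ∃ u, G.Adj u v ∧ #(G.neighborFinset v ∩ G.neighborFinset u) ≤ 2 := by
  by_contra! hcon
  let miss u := G.neighborFinset v \ G.neighborFinset u
  have hmiss {u : V} (hu : G.Adj v u) : #(miss u) + 3 ≤ G.degree v := by
    have := hcon u hu.symm
    rw [← card_neighborFinset_eq_degree,
      ← Finset.card_inter_add_card_sdiff (G.neighborFinset v) (G.neighborFinset u)]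
    lia
  have hmiss_two {u w : V} (hu : G.Adj v u) (hw : G.Adj v w) (huw : u ≠ w) (h : ¬ G.Adj u w) :
      G.degree v = 5 ∧ miss u = {u, w} := by
    have hsub : {u, w} ⊆ miss u := by
      simp [miss, Finset.insert_subset_iff, hu, hw, h]
    have hle := Finset.card_le_card hsub
    have := hmiss hu
    rw [Finset.card_pair huw] at hle
    refine ⟨by lia, (Finset.eq_of_subset_of_card_le hsub ?_).symm⟩
    rw [Finset.card_pair huw]
    lia
  obtain ⟨x, y, hx, hy, hxy, hnxy⟩ := exists_not_adj_of_cliqueFree_succ T.cliqueFree_five h4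
  obtain ⟨hdeg, hmiss_x⟩ := hmiss_two hx hy hxy hnxy
  obtain ⟨-, hmiss_y⟩ := hmiss_two hy hx hxy.symm (mt Adj.symm hnxy)
  have hadj {u z : V} (hz : G.Adj v z) (h : z ∉ miss u) : G.Adj u z := by
    simpa [miss, hz] using h
  obtain ⟨a, b, c, hab, hac, hbc, habc⟩ := Finset.card_eq_three.1
    (show #(G.neighborFinset v \ {x, y}) = 3 by
      rw [Finset.card_sdiff_of_subset (by simp [Finset.insert_subset_iff, hx, hy]),
        card_neighborFinset_eq_degree, hdeg, Finset.card_pair hxy])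
  have hmem {z : V} (hz : z ∈ ({a, b, c} : Finset V)) : G.Adj v z ∧ G.Adj x z ∧ G.Adj y z := by
    rw [← habc, Finset.mem_sdiff, mem_neighborFinset] at hz
    exact ⟨hz.1, hadj hz.1 (hmiss_x ▸ hz.2),
      hadj hz.1 (by rw [hmiss_y, Finset.pair_comm]; exact hz.2)⟩
  obtain ⟨hva, hxa, hya⟩ := hmem (z := a) (by simp)
  obtain ⟨hvb, hxb, hyb⟩ := hmem (z := b) (by simp)
  obtain ⟨hvc, hxc, hyc⟩ := hmem (z := c) (by simp)
  by_cases hac' : G.Adj a c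
  · exact T.false_of_adj_link hx hy hva hvb hvc hxa hxb hxc hya hyb hyc hac' hxy hab hbc
  · have hab' : G.Adj a b := hadj hvb <| by
      rw [(hmiss_two hva hvc hac hac').2]
      simp [hab.symm, hbc]
    exact T.false_of_adj_link hx hy hva hvc hvb hxa hxc hxb hya hyc hyb hab' hxy hac hbc.symm

theorem ncard_edgeSet_add_three_le [Finite V] (T : TurnParity G) {S : Finset V}
    (hS : S.Nonempty) (hGS : G.support ⊆ S) : G.edgeSet.ncard + 3 ≤ 3 * #S := by
  classical
  have := Fintype.ofFinite V
  induction S using Finset.strongInductionOn generalizing G with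
  | _ S ih =>
  by_contra! hcon
  have hS_pos := hS.card_pos
  obtain ⟨H, hHG, hH⟩ := exists_le_ncard_edgeSet_eq (by lia : 3 * #S - 2 ≤ G.edgeSet.ncard)
  replace hGS : H.support ⊆ S := (support_mono hHG).trans hGS
  have T := T.mono hHG
  obtain ⟨a, b, hab⟩ := exists_adj_of_ncard_edgeSet_pos (by lia : 0 < H.edgeSet.ncard)
  have hS_two : 1 < #S := Finset.one_lt_card.2 ⟨a, hGS ⟨b, hab⟩, b, hGS ⟨a, hab.symm⟩, hab.ne⟩
  obtain ⟨v, hvS, hv⟩ := exists_degree_lt (G := H) (S := S) (d := 6) (by lia)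
  have hcard := Finset.card_erase_add_one hvS
  have hne : (S.erase v).Nonempty := Finset.card_pos.1 (by lia)
  by_cases h3 : H.degree v ≤ 3
  · have hdel := ncard_edgeSet_deleteIncidenceSet_add_degree H v
    have := ih _ (Finset.erase_ssubset hvS) (T.mono (H.deleteIncidenceSet_le v)) hne
      (support_deleteIncidenceSet_subset_erase hGS v)
    lia
  · obtain ⟨u, huv, hu⟩ := T.exists_adj_card_inter_neighborFinset_le_two (v := v) (by lia) (by lia)
    have hle := ncard_edgeSet_le_identifyVertex (G := H) huv.ne
    rw [Finset.inter_insert_of_mem ((H.mem_neighborFinset v u).2 huv.symm)] at hle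
    have := Finset.card_insert_le u (H.neighborFinset v ∩ H.neighborFinset u)
    have := ih _ (Finset.erase_ssubset hvS) (T.identify huv) hne
      (support_identifyVertex_subset_erase hGS (hGS ⟨v, huv⟩) huv.ne)
    lia

end TurnParity

/-! ### Counting edges of bipartite graphs -/

section Bipartite

variable {V : Type*} {G H : SimpleGraph V} {a b c : V} {S : Finset V}

lemma not_adj_of_isBipartite (hG : G.IsBipartite) (hab : G.Adj a b) (hac : G.Adj a c) :
    ¬ G.Adj b c := by
  obtain ⟨C⟩ := hG
  intro hbc
  have := C.valid hab
  have := C.valid hac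
  have := C.valid hbc
  lia

lemma isBipartite_identifyVertex [DecidableEq V] (hG : G.IsBipartite) (hab : G.Adj a b)
    (hac : G.Adj a c) (hbc : b ≠ c) : (identifyVertex G c b).IsBipartite := by
  obtain ⟨C⟩ := hG
  have hCb := C.valid hab
  have hCc := C.valid hac
  refine ⟨.mk C fun {x y} hxy ↦ ?_⟩
  obtain ⟨-, -, -, h | ⟨rfl, h⟩ | ⟨rfl, h⟩⟩ := (identifyVertex_adj hbc).1 hxy
  all_goals
    have := C.valid h
    lia

lemma four_mul_ncard_edgeSet_le_sq (hG : G.IsBipartite) (hS : G.support ⊆ S) :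
    4 * G.edgeSet.ncard ≤ #S ^ 2 := by
  have hG' : (G.induce (S : Set V)).IsBipartite := hG.of_hom (Embedding.induce (S : Set V)).toHom
  have hle := hG'.four_mul_encard_edgeSet_le
  have hedge : G.edgeSet = _ :=
    (congrArg edgeSet ((G.spanningCoe_induce_eq_self _).2 hS).symm).trans (edgeSet_map _ _)
  have hfin : G.edgeSet.Finite := by
    rw [hedge]
    exact Set.toFinite _
  rw [← (Function.Embedding.injective _).encard_image, ← hedge, ← hfin.cast_ncard_eq,
    ENat.card_coe_set_eq, Set.encard_coe_eq_coe_finsetCard] at hle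
  exact_mod_cast hle

lemma two_le_ncard_edgeSet [Finite V] (hac : G.Adj a c) (hbc : G.Adj b c) (hab : a ≠ b) :
    2 ≤ G.edgeSet.ncard := by
  rw [← Set.ncard_pair (a := s(a, c)) (b := s(b, c)) fun h ↦ hab (Sym2.congr_left.1 h)]
  exact Set.ncard_le_ncard (Set.pair_subset hac hbc)

lemma ncard_edgeSet_sup_add_ncard_edgeSet_inf [Finite V] (G H : SimpleGraph V) :
    (G ⊔ H).edgeSet.ncard + (G ⊓ H).edgeSet.ncard = G.edgeSet.ncard + H.edgeSet.ncard := by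
  rw [edgeSet_sup, edgeSet_inf, Set.ncard_union_add_ncard_inter]

lemma spanningCoe_induce_adj {A : Set V} {u v : V} :
    (G.induce A).spanningCoe.Adj u v ↔ G.Adj u v ∧ u ∈ A ∧ v ∈ A := by
  simp

lemma support_spanningCoe_induce_subset (A : Set V) : (G.induce A).spanningCoe.support ⊆ A :=
  fun _ ⟨_, h⟩ ↦ (spanningCoe_induce_adj.1 h).2.1

lemma exists_walk_or_exists_separation [Finite V] {R : Set V} {d y : V} (hy : y ∉ R) :
    (∃ p : G.Walk d y, ∀ z ∈ R, z ∉ p.support) ∨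
      ∃ X : Finset V, y ∈ X ∧ d ∉ X ∧ (∀ x ∈ X, x ∉ R) ∧
        ∀ x ∈ X, ∀ z, G.Adj x z → z ∈ X ∨ z ∈ R := by
  let X : Finset V := (Set.toFinite {x | ∃ p : G.Walk x y, ∀ z ∈ R, z ∉ p.support}).toFinset
  have hX {x : V} : x ∈ X ↔ ∃ p : G.Walk x y, ∀ z ∈ R, z ∉ p.support := by simp [X]
  refine or_iff_not_imp_left.2 fun hd ↦ ⟨X, hX.2 ⟨.nil, ?_⟩, mt hX.1 hd, ?_, ?_⟩
  · simpa using fun z hz ↦ ne_of_mem_of_not_mem hz hy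
  · intro x hx
    obtain ⟨p, hp⟩ := hX.1 hx
    exact fun hxR ↦ hp x hxR p.start_mem_support
  · intro x hx z hxz
    obtain ⟨p, hp⟩ := hX.1 hx
    refine or_iff_not_imp_right.2 fun hz ↦ hX.2 ⟨.cons hxz.symm p, fun r hr ↦ ?_⟩
    simpa using ⟨ne_of_mem_of_not_mem hr hz, hp r hr⟩

open scoped Classical in
lemma ncard_edgeSet_add_one_le_identifyVertex_deleteIncidenceSet [Fintype V] (hab : G.Adj a b)
    (hac : G.Adj a c) (hbc : b ≠ c) (hbc' : ¬ G.Adj b c) :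
    G.edgeSet.ncard + 1 ≤ (identifyVertex (G.deleteIncidenceSet a) c b).edgeSet.ncard +
      G.degree a + #(G.neighborFinset b ∩ G.neighborFinset c) := by
  have hdel := ncard_edgeSet_deleteIncidenceSet_add_degree G a
  have hle : (G.deleteIncidenceSet a).edgeSet.ncard ≤
      (identifyVertex (G.deleteIncidenceSet a) c b).edgeSet.ncard +
        #((G.neighborFinset b ∩ G.neighborFinset c).erase a) := by
    grw [ncard_edgeSet_le_identifyVertex hbc]
    gcongr
    intro z
    simp only [Finset.mem_inter, Finset.mem_insert, Finset.mem_erase, mem_neighborFinset,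
      deleteIncidenceSet_adj]
    rintro ⟨⟨hcz, -, hz⟩, rfl | ⟨hbz, -⟩⟩
    · exact absurd hcz.symm hbc'
    · exact ⟨hz, hbz, hcz⟩
  have ha : a ∈ G.neighborFinset b ∩ G.neighborFinset c := by simp [hab.symm, hac.symm]
  have := Finset.card_erase_add_one ha
  lia

/-- Cutting along the three vertices `b`, `c`, `s` counts the edges `bs` and `cs` twice. -/
lemma ncard_edgeSet_add_four_le_of_separation [Finite V] [DecidableEq V] {s : V}
    {X : Finset V} (hGS : G.support ⊆ S)
    (ih : ∀ P ⊂ S, 3 ≤ #P → (G.induce (P : Set V)).spanningCoe.edgeSet.ncard + 4 ≤ 2 * #P)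
    (hbs : G.Adj b s) (hcs : G.Adj c s) (hbc : b ≠ c) (hX : X.Nonempty)
    (hdisj : Disjoint X {b, c, s}) (hPS : X ∪ {b, c, s} ⊂ S)
    (hXadj : ∀ x ∈ X, ∀ z, G.Adj x z → z ∈ X ∪ {b, c, s}) :
    G.edgeSet.ncard + 4 ≤ 2 * #S := by
  let P := X ∪ {b, c, s}
  let Q := S \ X
  have hcover : G ≤ (G.induce (P : Set V)).spanningCoe ⊔ (G.induce (Q : Set V)).spanningCoe := by
    intro u v huv
    have huS : u ∈ S := hGS ⟨v, huv⟩
    have hvS : v ∈ S := hGS ⟨u, huv.symm⟩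
    rw [sup_adj, spanningCoe_induce_adj, spanningCoe_induce_adj]
    simp only [P, Q, Finset.mem_coe]
    grind [G.adj_symm huv, hXadj u, hXadj v]
  have hinter : 2 ≤ ((G.induce (P : Set V)).spanningCoe ⊓
      (G.induce (Q : Set V)).spanningCoe).edgeSet.ncard := by
    have hmem {z : V} (hz : z ∈ ({b, c, s} : Finset V)) : z ∈ P ∧ z ∈ Q :=
      ⟨Finset.mem_union_right X hz, Finset.mem_sdiff.2
        ⟨hPS.subset (Finset.mem_union_right X hz), Finset.disjoint_right.1 hdisj hz⟩⟩
    have hadj {z : V} (hz : z ∈ ({b, c, s} : Finset V)) (hzs : G.Adj z s) :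
        ((G.induce (P : Set V)).spanningCoe ⊓ (G.induce (Q : Set V)).spanningCoe).Adj z s := by
      have hs := hmem (z := s) (by simp)
      exact ⟨spanningCoe_induce_adj.2 ⟨hzs, (hmem hz).1, hs.1⟩,
        spanningCoe_induce_adj.2 ⟨hzs, (hmem hz).2, hs.2⟩⟩
    exact two_le_ncard_edgeSet (hadj (by simp) hbs) (hadj (by simp) hcs) hbc
  have hP : #P = #X + 3 := by
    rw [Finset.card_union_of_disjoint hdisj,
      Finset.card_eq_three.2 ⟨b, c, s, hbc, hbs.ne, hcs.ne, rfl⟩]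
  have hXS : X ⊆ S := Finset.subset_union_left.trans hPS.subset
  have hQ : #Q + #X = #S := Finset.card_sdiff_add_card_eq_card hXS
  have hlt : #P < #S := Finset.card_lt_card hPS
  have hle := Set.ncard_le_ncard (edgeSet_mono hcover)
  have hsum := ncard_edgeSet_sup_add_ncard_edgeSet_inf (G.induce (P : Set V)).spanningCoe
    (G.induce (Q : Set V)).spanningCoe
  have := ih P hPS (by lia)
  have := ih Q (Finset.sdiff_ssubset hXS hX) (by lia)
  lia

/-- Otherwise the vertices that reach `y` off `{a, b, c, s}` are cut off by `b`, `c`, `s`. -/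
lemma exists_walk_of_lt_ncard_edgeSet [Finite V] (hGS : G.support ⊆ S)
    (ih : ∀ P ⊂ S, 3 ≤ #P → (G.induce (P : Set V)).spanningCoe.edgeSet.ncard + 4 ≤ 2 * #P)
    (he : 2 * #S < G.edgeSet.ncard + 4) {d s y : V}
    (ha : ∀ x, G.Adj a x ↔ x = b ∨ x = c ∨ x = d) (hbc : b ≠ c) (hbs : G.Adj b s)
    (hcs : G.Adj c s) (hby : G.Adj b y) (hcy : G.Adj c y) (hsa : s ≠ a) (hya : y ≠ a)
    (hys : y ≠ s) : ∃ p : G.Walk d y, ∀ z ∈ ({a, b, c, s} : Set V), z ∉ p.support := by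
  classical
  have hab : G.Adj a b := (ha b).2 (.inl rfl)
  have hac : G.Adj a c := (ha c).2 (.inr (.inl rfl))
  let R := ({a, b, c, s} : Set V) ∪ (S : Set V)ᶜ
  obtain ⟨p, hp⟩ | ⟨X, hyX, hdX, hXR, hXadj⟩ := exists_walk_or_exists_separation (G := G) (R := R)
    (d := d) (y := y) (by simp [R, hya, hby.ne', hcy.ne', hys, hGS ⟨b, hby.symm⟩])
  · exact ⟨p, fun z hz ↦ hp z (.inl hz)⟩
  have haX : a ∉ X := fun h ↦ hXR a h (by simp [R])
  have hbX : b ∉ X := fun h ↦ hXR b h (by simp [R])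
  have hcX : c ∉ X := fun h ↦ hXR c h (by simp [R])
  have hsX : s ∉ X := fun h ↦ hXR s h (by simp [R])
  have hXadj' : ∀ x ∈ X, ∀ z, G.Adj x z → z ∈ X ∪ {b, c, s} := by
    intro x hx z hxz
    have hza : z ≠ a := by
      rintro rfl
      rcases (ha x).1 hxz.symm with rfl | rfl | rfl <;> contradiction
    have hzS : z ∈ S := hGS ⟨x, hxz.symm⟩
    have hzR := hXadj x hx z hxz
    simp only [R, Set.mem_union, Set.mem_insert_iff, Set.mem_singleton_iff, Set.mem_compl_iff,
      Finset.mem_coe] at hzR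
    simp only [Finset.mem_union, Finset.mem_insert, Finset.mem_singleton]
    tauto
  have hXS : X ⊆ S := fun x hx ↦ by_contra fun hxS ↦ hXR x hx (.inr hxS)
  have hbcs : {b, c, s} ⊆ S := Finset.insert_subset (hGS ⟨s, hbs⟩) <|
    Finset.insert_subset (hGS ⟨s, hcs⟩) <| Finset.singleton_subset_iff.2 (hGS ⟨b, hbs.symm⟩)
  have hPS : X ∪ {b, c, s} ⊂ S := (Finset.ssubset_iff_of_subset (Finset.union_subset hXS hbcs)).2
    ⟨a, hGS ⟨b, hab⟩, by simp [haX, hab.ne, hac.ne, hsa.symm]⟩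
  have := ncard_edgeSet_add_four_le_of_separation hGS ih hbs hcs hbc ⟨y, hyX⟩
    (by simp [hbX, hcX, hsX]) hPS hXadj'
  lia

end Bipartite

namespace TurnParity

variable {V : Type*} {G : SimpleGraph V} {a b c d : V} {S : Finset V}

/-- Turn parities after deleting `a` and identifying two of its neighbours. -/
noncomputable def identifyNeighbors [DecidableEq V] (T : TurnParity G) (hab : G.Adj a b)
    (hac : G.Adj a c) (hbc : b ≠ c) :
    TurnParity (identifyVertex (G.deleteIncidenceSet a) c b) :=
  have hadj : (identifyVertex G a b).Adj b c :=
    (identifyVertex_adj hab.ne').2 ⟨hbc, hab.ne', hac.ne', .inr (.inl ⟨rfl, hac⟩)⟩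
  ((T.identify hab.symm).identify hadj).mono <| map_monotone _ fun x y h ↦ by
    rw [deleteIncidenceSet_adj] at h
    exact (identifyVertex_adj hab.ne').2 ⟨h.1.ne, h.2.1, h.2.2, .inl h.1⟩

open scoped Classical in
/-- With two further common neighbours `p` and `q`, the vertices `a`, `p`, `q` are each joined to
`b` and `c` by edges and to `d` by paths. -/
lemma ncard_edgeSet_add_four_le_of_three_le_card_inter [Fintype V] (T : TurnParity G)
    (hGS : G.support ⊆ S)
    (ih : ∀ P ⊂ S, 3 ≤ #P → (G.induce (P : Set V)).spanningCoe.edgeSet.ncard + 4 ≤ 2 * #P)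
    (ha : ∀ x, G.Adj a x ↔ x = b ∨ x = c ∨ x = d) (hbc : b ≠ c)
    (hcard : 3 ≤ #(G.neighborFinset b ∩ G.neighborFinset c)) :
    G.edgeSet.ncard + 4 ≤ 2 * #S := by
  by_contra! he
  have hab : G.Adj a b := (ha b).2 (.inl rfl)
  have hac : G.Adj a c := (ha c).2 (.inr (.inl rfl))
  have had : G.Adj a d := (ha d).2 (.inr (.inr rfl))
  have haC : a ∈ G.neighborFinset b ∩ G.neighborFinset c := by simp [hab.symm, hac.symm]
  obtain ⟨p, hp, q, hq, hpq⟩ := Finset.one_lt_card.1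
    (show 1 < #((G.neighborFinset b ∩ G.neighborFinset c).erase a) by
      have := Finset.card_erase_add_one haC
      lia)
  simp only [Finset.mem_erase, Finset.mem_inter, mem_neighborFinset] at hp hq
  obtain ⟨hpa, hbp, hcp⟩ := hp
  obtain ⟨hqa, hbq, hcq⟩ := hq
  obtain ⟨wp, hwp⟩ := exists_walk_of_lt_ncard_edgeSet hGS ih he ha hbc hbq hcq hbp hcp
    hqa hpa hpq
  obtain ⟨wq, hwq⟩ := exists_walk_of_lt_ncard_edgeSet hGS ih he ha hbc hbp hcp hbq hcq
    hpa hqa hpq.symm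
  simp only [Set.mem_insert_iff, Set.mem_singleton_iff, forall_eq_or_imp, forall_eq] at hwp hwq
  obtain ⟨hpa', hpb', hpc', hpq'⟩ := hwp
  obtain ⟨hqa', hqb', hqc', hqp'⟩ := hwq
  have hbd := ne_of_mem_of_not_mem wp.start_mem_support hpb'
  have hcd := ne_of_mem_of_not_mem wp.start_mem_support hpc'
  have hqd := ne_of_mem_of_not_mem wp.start_mem_support hpq'
  have hpd := ne_of_mem_of_not_mem wq.start_mem_support hqp'
  have hw : ∀ j, ∃ w : G.Walk d (![a, p, q] j), b ∉ w.support ∧ c ∉ w.support ∧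
      ∀ l, j ≠ l → ![a, p, q] l ∉ w.support := by
    intro j
    fin_cases j
    · exact ⟨had.symm.toWalk, by
        simp [Fin.forall_fin_succ, *, hab.ne', hac.ne', hbd.symm, hcd.symm, hpd.symm, hqd.symm]⟩
    · exact ⟨wp, by simp [Fin.forall_fin_succ, *]⟩
    · exact ⟨wq, by simp [Fin.forall_fin_succ, *]⟩
  choose w hwb hwc hwy using hw
  refine T.false_of_walks ?_ hbc ?_ ?_ w hwb hwc hwy
  · intro i j
    fin_cases i <;> fin_cases j <;> simp [hpa, hqa, hpq, hpa.symm, hqa.symm, hpq.symm]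
  · simp [Fin.forall_fin_succ, hab.symm, hbp, hbq]
  · simp [Fin.forall_fin_succ, hac.symm, hcp, hcq]

open scoped Classical in
lemma ncard_edgeSet_add_four_le_of_degree_eq_three [Fintype V] (T : TurnParity G)
    (hbip : G.IsBipartite) (hGS : G.support ⊆ S) (hS : 5 ≤ #S) (ha : G.degree a = 3)
    (ih : ∀ P ⊂ S, ∀ {H : SimpleGraph V}, TurnParity H → H.IsBipartite → 3 ≤ #P →
      H.support ⊆ P → H.edgeSet.ncard + 4 ≤ 2 * #P) :
    G.edgeSet.ncard + 4 ≤ 2 * #S := by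
  obtain ⟨b, c, d, hbc, -, -, hNa⟩ := Finset.card_eq_three.1
    ((G.card_neighborFinset_eq_degree a).trans ha)
  simp only [Finset.ext_iff, mem_neighborFinset, Finset.mem_insert, Finset.mem_singleton] at hNa
  have hab : G.Adj a b := (hNa b).2 (.inl rfl)
  have hac : G.Adj a c := (hNa c).2 (.inr (.inl rfl))
  have haS : a ∈ S := hGS ⟨b, hab⟩
  have hbS : b ∈ S.erase a := Finset.mem_erase.2 ⟨hab.ne', hGS ⟨a, hab.symm⟩⟩
  have hcS : c ∈ S.erase a := Finset.mem_erase.2 ⟨hac.ne', hGS ⟨a, hac.symm⟩⟩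
  by_cases hcommon : #(G.neighborFinset b ∩ G.neighborFinset c) ≤ 2
  · have hcard_a := Finset.card_erase_add_one haS
    have hcard_c := Finset.card_erase_add_one hcS
    have hle := ncard_edgeSet_add_one_le_identifyVertex_deleteIncidenceSet hab hac hbc
      (not_adj_of_isBipartite hbip hab hac)
    have := ih _ ((Finset.erase_ssubset hcS).trans (Finset.erase_ssubset haS))
      (T.identifyNeighbors hab hac hbc)
      ((isBipartite_identifyVertex hbip hab hac hbc).mono_left <|
        map_monotone _ (G.deleteIncidenceSet_le a)) (by lia)
      (support_identifyVertex_subset_erase (support_deleteIncidenceSet_subset_erase hGS a) hbS hbc)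
    lia
  · exact T.ncard_edgeSet_add_four_le_of_three_le_card_inter hGS
      (fun P hPS hP ↦ ih P hPS (T.mono (spanningCoe_induce_le G P))
        (hbip.mono_left (spanningCoe_induce_le G P)) hP (support_spanningCoe_induce_subset _))
      hNa hbc (by lia)

theorem ncard_edgeSet_add_four_le [Finite V] (T : TurnParity G) (hbip : G.IsBipartite)
    (hS : 3 ≤ #S) (hGS : G.support ⊆ S) : G.edgeSet.ncard + 4 ≤ 2 * #S := by
  classical
  have := Fintype.ofFinite V
  induction S using Finset.strongInductionOn generalizing G with
  | _ S ih =>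
  by_contra! hcon
  obtain ⟨H, hHG, hH⟩ := exists_le_ncard_edgeSet_eq (by lia : 2 * #S - 3 ≤ G.edgeSet.ncard)
  replace hGS : H.support ⊆ S := (support_mono hHG).trans hGS
  replace hbip : H.IsBipartite := hbip.mono_left hHG
  have T := T.mono hHG
  have hsq := four_mul_ncard_edgeSet_le_sq hbip hGS
  have hS6 : 6 ≤ #S := by
    by_contra! hlt
    interval_cases #S <;> lia
  obtain ⟨a, haS, ha⟩ := exists_degree_lt (G := H) (S := S) (d := 4) (by lia)
  by_cases ha2 : H.degree a ≤ 2
  · have hcard := Finset.card_erase_add_one haS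
    have hdel := ncard_edgeSet_deleteIncidenceSet_add_degree H a
    have := ih _ (Finset.erase_ssubset haS) (T.mono (H.deleteIncidenceSet_le a))
      (hbip.mono_left (H.deleteIncidenceSet_le a)) (by lia)
      (support_deleteIncidenceSet_subset_erase hGS a)
    lia
  · have := T.ncard_edgeSet_add_four_le_of_degree_eq_three hbip hGS (by lia)
      (by lia : H.degree a = 3) ih
    lia

lemma ncard_edgeSet_le_two_mul [Finite V] (T : TurnParity G) (hbip : G.IsBipartite)
    (hGS : G.support ⊆ S) : G.edgeSet.ncard ≤ 2 * #S := by
  by_cases h3 : 3 ≤ #S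
  · have := T.ncard_edgeSet_add_four_le hbip h3 hGS
    lia
  · have := four_mul_ncard_edgeSet_le_sq hbip hGS
    interval_cases #S <;> lia

end TurnParity

/-! ### Light vertices -/

section BigDegree

variable {V : Type*} [Fintype V] {G : SimpleGraph V} {t : ℕ} {v : V}

open scoped Classical in
/-- The number of neighbours of `v` of degree at least `t`. -/
noncomputable def bigDegree (G : SimpleGraph V) (t : ℕ) (v : V) : ℕ :=
  #{u ∈ G.neighborFinset v | t ≤ G.degree u}

open scoped Classical in
lemma bigDegree_le_degree (G : SimpleGraph V) (t : ℕ) (v : V) : bigDegree G t v ≤ G.degree v := by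
  rw [← card_neighborFinset_eq_degree]
  exact Finset.card_filter_le _ _

lemma bigDegree_anti (G : SimpleGraph V) (v : V) : Antitone (bigDegree G · v) :=
  fun _ _ h ↦ Finset.card_le_card (Finset.monotone_filter_right _ fun _ _ ht ↦ h.trans ht)

open scoped Classical in
lemma exists_degree_lt_of_bigDegree_lt (h : bigDegree G t v < G.degree v) :
    ∃ u, G.Adj v u ∧ G.degree u < t := by
  rw [← card_neighborFinset_eq_degree] at h
  simpa using Finset.filter_ssubset.1 <|
    (Finset.filter_subset _ _).ssubset_of_ne (ne_of_apply_ne Finset.card h.ne)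

open scoped Classical in
lemma sum_degree_sub_one_le {D : ℕ} (hdeg : ∀ u, G.degree u ≤ D) (v : V) :
    ∑ u ∈ G.neighborFinset v, (G.degree u - 1) ≤
      7 * G.degree v + 3 * bigDegree G 9 v + (D - 11) * bigDegree G 12 v := by
  calc ∑ u ∈ G.neighborFinset v, (G.degree u - 1)
      ≤ ∑ u ∈ G.neighborFinset v, (7 * 1 + 3 * (if 9 ≤ G.degree u then 1 else 0) +
          (D - 11) * (if 12 ≤ G.degree u then 1 else 0)) := by
        refine Finset.sum_le_sum fun u _ ↦ ?_
        have := hdeg u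
        split_ifs <;> lia
    _ = _ := by
        simp only [Finset.sum_add_distrib, ← Finset.mul_sum, ← Finset.card_filter,
          ← Finset.card_eq_sum_ones, card_neighborFinset_eq_degree, bigDegree]

end BigDegree

namespace TurnParity

variable {V : Type*} [Fintype V] {G : SimpleGraph V}

open scoped Classical in
lemma sum_card_neighborFinset_inter_le (T : TurnParity G) {A B : Finset V} (hAB : Disjoint A B) :
    ∑ v ∈ A, #(G.neighborFinset v ∩ B) ≤ 2 * (#A + #B) := by
  have hdisj : Disjoint (A : Set V) B := Finset.disjoint_coe.2 hAB
  have hbip := between_isBipartiteWith (G := G) hdisj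
  have hdeg : ∀ v ∈ A, (G.between A B).degree v = #(G.neighborFinset v ∩ B) := by
    intro v hv
    rw [← card_neighborFinset_eq_degree]
    congr 1
    ext u
    simp [between_adj, hv, Finset.disjoint_left.1 hAB hv]
  have hle := (T.mono G.between_le).ncard_edgeSet_le_two_mul (S := A ∪ B)
    (between_isBipartite hdisj) (by simpa using isBipartiteWith_support_subset hbip)
  rwa [Finset.card_union_of_disjoint hAB, ← coe_edgeFinset, Set.ncard_coe_finset,
    ← isBipartiteWith_sum_degrees_eq_card_edges hbip, Finset.sum_congr rfl hdeg] at hle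

open scoped Classical in
lemma sum_bigDegree_sub_two_le (T : TurnParity G) {t : ℕ} (ht : 6 ≤ t) :
    ∑ v, (if G.degree v ≤ 5 then bigDegree G t v - 2 else 0) ≤
      2 * ∑ v, (if t ≤ G.degree v then 1 else 0) := by
  let A : Finset V := {v | G.degree v ≤ 5 ∧ 3 ≤ bigDegree G t v}
  let B : Finset V := {v | t ≤ G.degree v}
  have hAB : Disjoint A B := Finset.disjoint_filter.2 fun v _ h ↦ by lia
  have hinter : ∀ v, #(G.neighborFinset v ∩ B) = bigDegree G t v := fun v ↦ by
    rw [Finset.inter_filter, Finset.inter_univ, bigDegree]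
  have hcount : ∑ v ∈ A, bigDegree G t v ≤ 2 * (#A + #B) := by
    simpa only [hinter] using T.sum_card_neighborFinset_inter_le hAB
  have hsub : ∑ v ∈ A, bigDegree G t v = ∑ v ∈ A, (bigDegree G t v - 2) + 2 * #A := by
    rw [mul_comm, ← smul_eq_mul, ← Finset.sum_const, ← Finset.sum_add_distrib]
    refine Finset.sum_congr rfl fun v hv ↦ ?_
    have := (Finset.mem_filter.1 hv).2.2
    lia
  calc ∑ v, (if G.degree v ≤ 5 then bigDegree G t v - 2 else 0)
      = ∑ v ∈ A, (bigDegree G t v - 2) := by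
        rw [Finset.sum_filter]
        exact Finset.sum_congr rfl fun v _ ↦ by split_ifs <;> lia
    _ ≤ 2 * #B := by lia
    _ = 2 * ∑ v, (if t ≤ G.degree v then 1 else 0) := by rw [Finset.card_filter]

open scoped Classical in
lemma exists_light_vertex (T : TurnParity G) {a b : V} (hab : G.Adj a b) :
    ∃ v, 1 ≤ G.degree v ∧ G.degree v ≤ 5 ∧
      3 * ((bigDegree G 9 v - 2) + (bigDegree G 12 v - 2)) < 2 * (6 - G.degree v) := by
  by_contra! hcon
  have hsupp : G.support ⊆ ({v | 0 < G.degree v} : Finset V) := fun v hv ↦ by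
    simpa [G.degree_pos_iff_mem_support] using hv
  have hE := T.ncard_edgeSet_add_three_le ⟨a, hsupp ⟨b, hab⟩⟩ hsupp
  rw [Finset.card_filter] at hE
  have h9 := T.sum_bigDegree_sub_two_le (t := 9) (by norm_num)
  have h12 := T.sum_bigDegree_sub_two_le (t := 12) (by norm_num)
  -- Discharging: out of its charge `2 * degree - 12`, a vertex gives away 6 if its degree is
  -- at least 9, and 6 more if its degree is at least 12.
  have hsum : ∑ v, (12 * (if 0 < G.degree v then 1 else 0) +
        6 * (if 9 ≤ G.degree v then 1 else 0) + 6 * (if 12 ≤ G.degree v then 1 else 0)) ≤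
      ∑ v, (2 * G.degree v + 3 * (if G.degree v ≤ 5 then bigDegree G 9 v - 2 else 0) +
        3 * (if G.degree v ≤ 5 then bigDegree G 12 v - 2 else 0)) := by
    refine Finset.sum_le_sum fun v _ ↦ ?_
    have := hcon v
    split_ifs <;> lia
  simp only [Finset.sum_add_distrib, ← Finset.mul_sum,
    sum_degree_eq_two_mul_ncard_edgeSet] at hsum
  lia

open scoped Classical in
theorem exists_adj_degree_add_degree_le (T : TurnParity G) {a b : V} (hab : G.Adj a b) {D : ℕ}
    (hD : 12 ≤ D) (hdeg : ∀ v, G.degree v ≤ D) :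
    ∃ v u, G.Adj u v ∧ G.degree v ≤ 5 ∧ G.degree u + G.degree v ≤ D + 2 ∧
      ∑ w ∈ G.neighborFinset v, (G.degree w - 1) ≤ 2 * D + 19 := by
  obtain ⟨v, hpos, hle, hlight⟩ := T.exists_light_vertex hab
  have hanti : bigDegree G 12 v ≤ bigDegree G 9 v := bigDegree_anti G v (by norm_num)
  have hbig := bigDegree_le_degree G 9 v
  have hsum := sum_degree_sub_one_le hdeg v
  have hmul : (D - 11) * bigDegree G 12 v ≤ (D - 11) * 2 := Nat.mul_le_mul_left _ (by lia)
  obtain ⟨u, hvu, hu⟩ : ∃ u, G.Adj v u ∧ G.degree u + G.degree v ≤ D + 2 := by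
    obtain h | h | h : G.degree v ≤ 2 ∨ G.degree v = 3 ∨ 4 ≤ G.degree v := by lia
    · obtain ⟨u, hvu⟩ := (G.degree_pos_iff_exists_adj v).1 hpos
      exact ⟨u, hvu, by grw [hdeg u, h]⟩
    · obtain ⟨u, hvu, hu⟩ := exists_degree_lt_of_bigDegree_lt (G := G) (v := v) (t := 12) (by lia)
      exact ⟨u, hvu, by lia⟩
    · obtain ⟨u, hvu, hu⟩ := exists_degree_lt_of_bigDegree_lt (G := G) (v := v) (t := 9) (by lia)
      exact ⟨u, hvu, by lia⟩
  refine ⟨v, u, hvu.symm, hle, hu, ?_⟩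
  obtain h | h : G.degree v ≤ 4 ∨ G.degree v = 5 := by lia
  all_goals lia

end TurnParity

/-! ### Frugal colourings -/

section FrugalColoring

lemma isFrugalColoring_bot {V α : Type*} (c : V → α) (k : ℕ) :
    (⊥ : SimpleGraph V).IsFrugalColoring k c :=
  ⟨fun _ _ h ↦ h.elim, fun _ _ ↦ by simp⟩

lemma exists_card_mul_le_card_fiber_lt {α β : Type*} [DecidableEq β] (s : Finset α) (c : α → β)
    {k : ℕ} (hk : 1 ≤ k) : ∃ F : Finset β, #F * k ≤ #s ∧ ∀ b ∉ F, #{x ∈ s | c x = b} < k := by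
  refine ⟨{b ∈ s.image c | k ≤ #{x ∈ s | c x = b}}, ?_, fun b hb ↦ ?_⟩
  · calc _ ≤ ∑ b ∈ s.image c with k ≤ #{x ∈ s | c x = b}, #{x ∈ s | c x = b} :=
          Finset.card_nsmul_le_sum _ _ k fun b hb ↦ (Finset.mem_filter.1 hb).2
      _ ≤ ∑ b ∈ s.image c, #{x ∈ s | c x = b} :=
          Finset.sum_le_sum_of_subset (Finset.filter_subset _ _)
      _ = #s := (Finset.card_eq_sum_card_image c s).symm
  · by_contra! h
    obtain ⟨x, hx⟩ := Finset.card_pos.1 (hk.trans h)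
    rw [Finset.mem_filter] at hx
    exact hb (Finset.mem_filter.2 ⟨Finset.mem_image.2 ⟨x, hx⟩, h⟩)

variable {V α : Type*} {G H : SimpleGraph V} {u v w : V} {c : V → α} {k : ℕ}

open scoped Classical in
lemma degree_identifyVertex_add_two_le [Fintype V] (huv : G.Adj u v) :
    (identifyVertex G v u).degree u + 2 ≤ G.degree u + G.degree v := by
  have hsub : (identifyVertex G v u).neighborFinset u ⊆
      (G.neighborFinset u).erase v ∪ (G.neighborFinset v).erase u := by
    intro y
    simp only [mem_neighborFinset, identifyVertex_adj huv.ne, Finset.mem_union, Finset.mem_erase]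
    tauto
  have hle := (Finset.card_le_card hsub).trans (Finset.card_union_le _ _)
  have hu : #((G.neighborFinset u).erase v) + 1 = _ :=
    Finset.card_erase_add_one (by simpa using huv)
  have hv : #((G.neighborFinset v).erase u) + 1 = _ :=
    Finset.card_erase_add_one (by simpa using huv.symm)
  simp only [card_neighborFinset_eq_degree] at hle hu hv
  lia

open scoped Classical in
lemma degree_identifyVertex_le [Fintype V] (huv : u ≠ v) (hw : w ≠ u) :
    (identifyVertex G v u).degree w ≤ G.degree w := by
  have hsub : (identifyVertex G v u).neighborFinset w ⊆
      (G.neighborFinset w).image (Function.update id v u) := by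
    intro y
    simp only [mem_neighborFinset, identifyVertex_adj huv, Finset.mem_image, Function.update_apply]
    grind [G.adj_comm]
  simpa only [card_neighborFinset_eq_degree] using
    (Finset.card_le_card hsub).trans Finset.card_image_le

lemma isFrugalColoring_mono [Finite V] (h : H ≤ G) (hc : G.IsFrugalColoring k c) :
    H.IsFrugalColoring k c :=
  ⟨fun x y hxy ↦ hc.1 x y (h hxy), fun x b ↦
    (Set.ncard_le_ncard fun _ ↦ And.imp_left (@h x _)).trans (hc.2 x b)⟩

/-- Identifying `v` with `u` turns the other neighbours of `v` into neighbours of `u`, where their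
colours differ from that of `u`. -/
lemma ncard_neighborSet_color_le_of_identifyVertex [Finite V] [DecidableEq V] (huv : G.Adj u v)
    (hk : 1 ≤ k) (hc : (identifyVertex G v u).IsFrugalColoring k c) (b : α) :
    {x | x ∈ G.neighborSet v ∧ c x = b}.ncard ≤ k := by
  have hadj : ∀ y, G.Adj v y → y ≠ u → (identifyVertex G v u).Adj u y := fun y hy hyu ↦
    (identifyVertex_adj huv.ne).2 ⟨hyu.symm, huv.ne, hy.ne', .inr (.inl ⟨rfl, hy⟩)⟩
  by_cases hb : b = c u
  · subst hb
    refine ((Set.ncard_le_one (Set.toFinite _)).2 ?_).trans hk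
    have heq : ∀ y, G.Adj v y → c y = c u → y = u := fun y hy hyc ↦ by
      by_contra hyu
      exact hc.1 u y (hadj y hy hyu) hyc.symm
    rintro x ⟨hx, hxc⟩ y ⟨hy, hyc⟩
    rw [heq x hx hxc, heq y hy hyc]
  · refine (Set.ncard_le_ncard ?_).trans (hc.2 u b)
    rintro y ⟨hy, rfl⟩
    exact ⟨hadj y hy fun h ↦ hb (congrArg c h), rfl⟩

open scoped Classical in
lemma isFrugalColoring_update [Fintype V] (hc : (G.deleteIncidenceSet v).IsFrugalColoring k c)
    (hcv : ∀ b, {x | x ∈ G.neighborSet v ∧ c x = b}.ncard ≤ k) {a : α}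
    (ha : ∀ w, G.Adj v w → c w ≠ a)
    (ha' : ∀ w, G.Adj v w → #{x ∈ (G.neighborFinset w).erase v | c x = a} < k) :
    G.IsFrugalColoring k (Function.update c v a) := by
  refine ⟨fun x y hxy ↦ ?_, fun x b ↦ ?_⟩
  · obtain rfl | hx := eq_or_ne x v
    · simpa [hxy.ne'] using (ha y hxy).symm
    obtain rfl | hy := eq_or_ne y v
    · simpa [hxy.ne] using ha x hxy.symm
    simpa [hx, hy] using hc.1 x y (deleteIncidenceSet_adj.2 ⟨hxy, hx, hy⟩)
  obtain rfl | hx := eq_or_ne x v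
  · refine (Set.ncard_le_ncard ?_).trans (hcv b)
    rintro y ⟨hy, hyb⟩
    rw [Function.update_of_ne hy.ne'] at hyb
    exact ⟨hy, hyb⟩
  by_cases hxv : G.Adj v x ∧ b = a
  · obtain ⟨hvx, rfl⟩ := hxv
    have hsub : {y | y ∈ G.neighborSet x ∧ Function.update c v b y = b} ⊆
        (insert v {y ∈ (G.neighborFinset x).erase v | c y = b} : Finset V) := by
      rintro y ⟨hy, hyb⟩
      obtain rfl | hyv := eq_or_ne y v
      · simp
      · rw [Function.update_of_ne hyv] at hyb
        simpa [hyb, hyv] using hy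
    calc _ ≤ _ := Set.ncard_le_ncard hsub
      _ ≤ #{y ∈ (G.neighborFinset x).erase v | c y = b} + 1 := by
        rw [Set.ncard_coe_finset]
        exact Finset.card_insert_le _ _
      _ ≤ k := ha' x hvx
  · refine (Set.ncard_le_ncard ?_).trans (hc.2 x b)
    rintro y ⟨hy, hyb⟩
    obtain rfl | hyv := eq_or_ne y v
    · rw [Function.update_self] at hyb
      exact absurd ⟨hy.symm, hyb.symm⟩ hxv
    · rw [Function.update_of_ne hyv] at hyb
      exact ⟨deleteIncidenceSet_adj.2 ⟨hy, hx, hyv⟩, hyb⟩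

open scoped Classical in
lemma exists_isFrugalColoring_update [Fintype V] (huv : G.Adj u v) (hk : 1 ≤ k)
    (hc : (identifyVertex G v u).IsFrugalColoring k c) {L : Finset α}
    (hL : (∑ w ∈ G.neighborFinset v, (G.degree w - 1)) / k + G.degree v < #L) :
    ∃ a ∈ L, G.IsFrugalColoring k (Function.update c v a) := by
  have hdel : G.deleteIncidenceSet v ≤ identifyVertex G v u := fun x y hxy ↦ by
    rw [deleteIncidenceSet_adj] at hxy
    exact (identifyVertex_adj huv.ne).2 ⟨hxy.1.ne, hxy.2.1, hxy.2.2, .inl hxy.1⟩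
  choose F hF hlt using fun w ↦
    exists_card_mul_le_card_fiber_lt ((G.neighborFinset w).erase v) c hk
  have hfull : #((G.neighborFinset v).biUnion F) ≤
      (∑ w ∈ G.neighborFinset v, (G.degree w - 1)) / k := by
    rw [Nat.le_div_iff_mul_le hk]
    grw [Finset.card_biUnion_le]
    rw [Finset.sum_mul]
    refine Finset.sum_le_sum fun w hw ↦ (hF w).trans_eq ?_
    rw [mem_neighborFinset] at hw
    rw [Finset.card_erase_of_mem (by simpa using hw.symm), card_neighborFinset_eq_degree]
  have hforb : #((G.neighborFinset v).image c ∪ (G.neighborFinset v).biUnion F) < #L := by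
    refine lt_of_le_of_lt ?_ hL
    grw [Finset.card_union_le, Finset.card_image_le, hfull, card_neighborFinset_eq_degree, add_comm]
  obtain ⟨a, haL, ha⟩ := Finset.exists_mem_notMem_of_card_lt_card hforb
  simp only [Finset.mem_union, Finset.mem_image, Finset.mem_biUnion, mem_neighborFinset, not_or,
    not_exists, not_and] at ha
  exact ⟨a, haL, isFrugalColoring_update (isFrugalColoring_mono hdel hc)
    (ncard_neighborSet_color_le_of_identifyVertex huv hk hc) ha.1
    fun w hw ↦ hlt w a (ha.2 w hw)⟩

end FrugalColoring

open scoped Classical in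
theorem TurnParity.exists_isFrugalColoring {V α : Type*} [Fintype V] {G : SimpleGraph V}
    (T : TurnParity G) {D k : ℕ} (hD : 12 ≤ D) (hk : 1 ≤ k) (hdeg : ∀ v, G.degree v ≤ D)
    (L : V → Finset α) (hL : ∀ v, (2 * D + 19) / k + 6 ≤ #(L v)) {S : Finset V}
    (hGS : G.support ⊆ S) : ∃ c : V → α, (∀ v, c v ∈ L v) ∧ G.IsFrugalColoring k c := by
  induction S using Finset.strongInductionOn generalizing G with
  | _ S ih =>
  obtain rfl | hG := eq_or_ne G ⊥
  · choose c hc using fun v ↦ Finset.card_pos.1 ((Nat.succ_pos _).trans_le (hL v))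
    exact ⟨c, hc, isFrugalColoring_bot c k⟩
  obtain ⟨a, b, hab⟩ := ne_bot_iff_exists_adj.1 hG
  obtain ⟨v, u, huv, hv, hdeg_add, hsum⟩ := T.exists_adj_degree_add_degree_le hab hD hdeg
  have hdeg' : ∀ w, (identifyVertex G v u).degree w ≤ D := fun w ↦ by
    obtain rfl | hw := eq_or_ne w u
    · have := degree_identifyVertex_add_two_le huv
      lia
    · exact (degree_identifyVertex_le huv.ne hw).trans (hdeg w)
  obtain ⟨c, hcL, hc⟩ := ih _ (Finset.erase_ssubset (hGS ⟨u, huv.symm⟩)) (T.identify huv) hdeg'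
    (support_identifyVertex_subset_erase hGS (hGS ⟨v, huv⟩) huv.ne)
  obtain ⟨x, hx, hcx⟩ := exists_isFrugalColoring_update huv hk hc (L := L v) <| by
    have := Nat.div_le_div_right (c := k) hsum
    have := hL v
    lia
  refine ⟨Function.update c v x, fun w ↦ ?_, hcx⟩
  obtain rfl | hw := eq_or_ne w v
  · rwa [Function.update_self]
  · rw [Function.update_of_ne hw]
    exact hcL w

theorem frugalChoiceNumber_planar_le_general {V : Type*} [Fintype V] (G : SimpleGraph V)
    [DecidableRel G.Adj] (hG : G.IsPlanar) (k : ℕ) (hk : 1 ≤ k) :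
    G.frugalChoiceNumber k ≤ (2 * max G.maxDegree 12 + 19) / k + 6 := by
  obtain ⟨P⟩ := hG
  have hdeg : ∀ v, G.degree v ≤ max G.maxDegree 12 := fun v ↦
    le_max_of_le_left (G.degree_le_maxDegree v)
  exact Nat.sInf_le fun L hL ↦ P.turnParity.exists_isFrugalColoring (le_max_right _ _) hk
    (fun v ↦ by convert hdeg v) L (fun v ↦ (hL v).ge) (S := Finset.univ) (by simp)

/-- For any planar graph `G` with `Δ(G) ≥ 12` and `k ≥ 1`,
`ch_k(G) ≤ ⌊(2Δ(G) + 19)/k⌋ + 6`. -/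
theorem frugalChoiceNumber_planar_le {V : Type*} [Fintype V] (G : SimpleGraph V)
    [DecidableRel G.Adj] (hG : G.IsPlanar) (hΔ : 12 ≤ G.maxDegree) (k : ℕ) (hk : 1 ≤ k) :
    G.frugalChoiceNumber k ≤ (2 * G.maxDegree + 19) / k + 6 := by
  simpa only [max_eq_left hΔ] using frugalChoiceNumber_planar_le_general G hG k hk
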